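/- Let H be a 3-uniform 3-partite hypergraph with edge ideal I = I(H). Then I^(2) = I^2 + (∏_{x∈V(B)} x : B is a bad subhypergraph of length 3 in H). -/

import Mathlib

open MvPolynomial

noncomputable def symbolicPower {R : Type*} [CommRing R] (I : Ideal R) (n : ℕ) : Ideal R :=
  sInf { J : Ideal R | ∃ (p : Ideal R) (hp : p.IsPrime),
    p ∈ associatedPrimes R (R ⧸ I) ∧
    J = Ideal.comap (algebraMap R (Localization (@Ideal.primeCompl R _ p hp)))
        (Ideal.map (algebraMap R (Localization (@Ideal.primeCompl R _ p hp))) (I ^ n)) }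

noncomputable def edgeIdeal (k : Type*) {V : Type*} [CommRing k] [DecidableEq V]
    (E : Finset (Finset V)) : Ideal (MvPolynomial V k) :=
  Ideal.span ((fun e : Finset V => ∏ x ∈ e, (X x : MvPolynomial V k)) '' ↑E)

/-- three hyperedges forming a bad subhypergraph of length 3: pairwise distinct,
pairwise intersecting in exactly one vertex, with the three intersection vertices
pairwise distinct. -/
def BadTriple {V : Type*} [DecidableEq V] (E : Finset (Finset V))
    (e₁ e₂ e₃ : Finset V) : Prop :=
  e₁ ∈ E ∧ e₂ ∈ E ∧ e₃ ∈ E ∧ e₁ ≠ e₂ ∧ e₂ ≠ e₃ ∧ e₁ ≠ e₃ ∧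
  (e₁ ∩ e₂).card = 1 ∧ (e₂ ∩ e₃).card = 1 ∧ (e₁ ∩ e₃).card = 1 ∧
  e₁ ∩ e₂ ≠ e₂ ∩ e₃ ∧ e₂ ∩ e₃ ≠ e₁ ∩ e₃ ∧ e₁ ∩ e₂ ≠ e₁ ∩ e₃

section SymbolicPower

variable {R : Type*} [CommRing R] {I : Ideal R}

theorem mem_symbolicPower_iff {n : ℕ} {f : R} :
    f ∈ symbolicPower I n ↔ ∀ p ∈ associatedPrimes R (R ⧸ I), ∃ s ∉ p, s * f ∈ I ^ n := by
  simp only [symbolicPower, Submodule.mem_sInf, Set.mem_ofPred_eq]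
  constructor
  · intro h p hp
    have hp' : p.IsPrime := hp.isPrime
    have := h _ ⟨p, hp', hp, rfl⟩
    rw [Ideal.mem_comap,
      IsLocalization.algebraMap_mem_map_algebraMap_iff p.primeCompl] at this
    exact this
  · rintro h _ ⟨p, hp', hp, rfl⟩
    rw [Ideal.mem_comap,
      IsLocalization.algebraMap_mem_map_algebraMap_iff p.primeCompl]
    exact h p hp

theorem mem_associatedPrimes_quotient_iff [IsNoetherianRing R] {p : Ideal R} :
    p ∈ associatedPrimes R (R ⧸ I) ↔ p.IsPrime ∧ ∃ f, ∀ g, g ∈ p ↔ g * f ∈ I := by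
  rw [AssociatedPrimes.mem_iff, isAssociatedPrime_iff]
  refine and_congr_right fun _ => ?_
  rw [(Ideal.Quotient.mk_surjective (I := I)).exists]
  refine exists_congr fun f => ?_
  rw [Ideal.ext_iff]
  refine forall_congr' fun g => ?_
  rw [Submodule.mem_colon_singleton, Submodule.mem_bot, Algebra.smul_def,
    Ideal.Quotient.algebraMap_eq, ← map_mul, Ideal.Quotient.eq_zero_iff_mem]

theorem le_of_mem_associatedPrimes_quotient [IsNoetherianRing R] {p : Ideal R}
    (hp : p ∈ associatedPrimes R (R ⧸ I)) : I ≤ p := by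
  obtain ⟨_, f, hf⟩ := mem_associatedPrimes_quotient_iff.1 hp
  exact fun g hg => (hf g).2 (I.mul_mem_right f hg)

theorem pow_le_symbolicPower (n : ℕ) : I ^ n ≤ symbolicPower I n := fun f hf =>
  mem_symbolicPower_iff.2 fun p hp =>
    ⟨1, (Ideal.ne_top_iff_one p).1 hp.isPrime.ne_top, by rwa [one_mul]⟩

/-- A radical ideal agrees with each of its associated primes `p` after localizing at `p`. -/
theorem mem_symbolicPower_of_forall_mem_pow [IsNoetherianRing R] (hI : I.IsRadical) {n : ℕ}
    {f : R} (h : ∀ p ∈ associatedPrimes R (R ⧸ I), f ∈ p ^ n) : f ∈ symbolicPower I n := by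
  refine mem_symbolicPower_iff.2 fun p hp => ?_
  obtain ⟨hprime, s, hs⟩ := mem_associatedPrimes_quotient_iff.1 hp
  have hsp : s ∉ p := fun hmem => hprime.ne_top <| (Ideal.eq_top_iff_one p).2 <|
    (hs 1).2 <| by
      rw [one_mul]
      exact hI ⟨2, by rw [pow_two]; exact (hs s).1 hmem⟩
  refine ⟨s ^ n, fun hmem => hsp (hprime.mem_of_pow_mem n hmem), ?_⟩
  have hle : Ideal.span {s} * p ≤ I := Ideal.span_singleton_mul_le_iff.2 fun g hg => by
    rw [mul_comm]
    exact (hs g).1 hg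
  have := Ideal.pow_right_mono hle n
  rw [mul_pow] at this
  exact this (Ideal.mul_mem_mul (Ideal.pow_mem_pow (Ideal.mem_span_singleton_self s) n) (h p hp))

end SymbolicPower

section MarkVars

variable {k V : Type*} [Field k] [DecidableEq V]

/-- Multiply every variable in `C` by a new variable, which then records the degree in `C`. -/
noncomputable def markVars (k : Type*) {V : Type*} [Field k] [DecidableEq V] (C : Finset V) :
    MvPolynomial V k →ₐ[k] Polynomial (MvPolynomial V k) :=
  aeval fun v => if v ∈ C then Polynomial.X * Polynomial.C (X v) else Polynomial.C (X v)

/-- The prime ideal generated by the variables in `C`. -/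
noncomputable def coverIdeal (k : Type*) {V : Type*} [Field k] [DecidableEq V] (C : Finset V) :
    Ideal (MvPolynomial V k) :=
  (Ideal.span {Polynomial.X}).comap (markVars k C)

theorem mem_coverIdeal_iff_dvd {C : Finset V} {f : MvPolynomial V k} :
    f ∈ coverIdeal k C ↔ Polynomial.X ∣ markVars k C f := by
  rw [coverIdeal, Ideal.mem_comap, Ideal.mem_span_singleton]

theorem coverIdeal_isPrime (C : Finset V) : (coverIdeal k C).IsPrime := by
  have : (Ideal.span {(Polynomial.X : Polynomial (MvPolynomial V k))}).IsPrime :=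
    (Ideal.span_singleton_prime Polynomial.X_ne_zero).2 Polynomial.prime_X
  exact Ideal.comap_isPrime _ _

theorem dvd_markVars_of_mem_pow {C : Finset V} {f : MvPolynomial V k} {n : ℕ}
    (hf : f ∈ coverIdeal k C ^ n) : Polynomial.X ^ n ∣ markVars k C f := by
  have := Ideal.le_comap_pow (K := Ideal.span {Polynomial.X}) (markVars k C) n hf
  rwa [Ideal.mem_comap, Ideal.span_singleton_pow, Ideal.mem_span_singleton] at this

variable [Fintype V]

theorem markVars_monomial (C : Finset V) (m : V →₀ ℕ) (a : k) :
    markVars k C (monomial m a) = Polynomial.monomial (∑ v ∈ C, m v) (monomial m a) := by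
  have hpow : ∀ v, (if v ∈ C then Polynomial.X * Polynomial.C (X v) else
      (Polynomial.C (X v) : Polynomial (MvPolynomial V k))) ^ m v =
      (if v ∈ C then Polynomial.X ^ m v else 1) * Polynomial.C (X v ^ m v) := by
    intro v
    split_ifs
    · rw [mul_pow, map_pow]
    · rw [map_pow, one_mul]
  rw [markVars, aeval_monomial, Finsupp.prod_fintype _ _ (by simp)]
  simp only [hpow]
  rw [Finset.prod_mul_distrib, Finset.prod_ite_mem, Finset.univ_inter,
    Finset.prod_pow_eq_pow_sum, ← map_prod, ← Polynomial.C_mul_X_pow_eq_monomial,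
    monomial_eq, Finsupp.prod_fintype _ _ (by simp), map_mul]
  simp only [IsScalarTower.algebraMap_apply k (MvPolynomial V k) (Polynomial (MvPolynomial V k)),
    algebraMap_eq, Polynomial.algebraMap_eq]
  ring

theorem coeff_coeff_markVars (C : Finset V) (f : MvPolynomial V k) (d : ℕ) (m : V →₀ ℕ) :
    coeff m ((markVars k C f).coeff d) = if ∑ v ∈ C, m v = d then coeff m f else 0 := by
  induction f using MvPolynomial.induction_on' with
  | monomial n a =>
    rw [markVars_monomial, Polynomial.coeff_monomial, coeff_monomial]
    by_cases hnm : n = m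
    · subst hnm
      rw [if_pos rfl]
      split_ifs <;> simp
    · split_ifs <;> simp [coeff_monomial, hnm]
  | add p q hp hq =>
    rw [map_add, Polynomial.coeff_add, coeff_add, hp, hq, coeff_add]
    split_ifs <;> simp

theorem X_pow_dvd_markVars_iff {C : Finset V} {f : MvPolynomial V k} {n : ℕ} :
    Polynomial.X ^ n ∣ markVars k C f ↔ ∀ m ∈ f.support, n ≤ ∑ v ∈ C, m v := by
  rw [Polynomial.X_pow_dvd_iff]
  constructor
  · intro h m hm
    by_contra! hlt
    have := coeff_coeff_markVars C f (∑ v ∈ C, m v) m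
    rw [h _ hlt, if_pos rfl, coeff_zero] at this
    exact mem_support_iff.1 hm this.symm
  · intro h d hd
    ext m
    rw [coeff_coeff_markVars, coeff_zero]
    split_ifs with hmd
    · by_contra hm
      have := h m (mem_support_iff.2 hm)
      omega
    · rfl

theorem mem_coverIdeal_iff {C : Finset V} {f : MvPolynomial V k} :
    f ∈ coverIdeal k C ↔ ∀ m ∈ f.support, 1 ≤ ∑ v ∈ C, m v := by
  rw [mem_coverIdeal_iff_dvd, ← X_pow_dvd_markVars_iff, pow_one]

theorem X_mem_coverIdeal_iff {C : Finset V} {v : V} :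
    (X v : MvPolynomial V k) ∈ coverIdeal k C ↔ v ∈ C := by
  simp [mem_coverIdeal_iff, support_X, Finsupp.single_apply, Nat.one_le_iff_ne_zero]

end MarkVars

section Monomial

variable {k V : Type*} [Field k]

theorem prod_X_eq_monomial (e : Finset V) :
    ∏ x ∈ e, (X x : MvPolynomial V k) = monomial (∑ x ∈ e, Finsupp.single x 1) 1 := by
  rw [monomial_sum_one]
  rfl

theorem monomial_mem_of_le {J : Ideal (MvPolynomial V k)} {n m : V →₀ ℕ} (a : k)
    (hn : monomial n 1 ∈ J) (hnm : n ≤ m) : monomial m a ∈ J := by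
  have : monomial m a = monomial (m - n) a * monomial n 1 := by
    rw [monomial_mul, tsub_add_cancel_of_le hnm, mul_one]
  rw [this]
  exact J.mul_mem_left _ hn

theorem mem_of_forall_monomial_mem {J : Ideal (MvPolynomial V k)} {f : MvPolynomial V k}
    (h : ∀ m ∈ f.support, monomial m (coeff m f) ∈ J) : f ∈ J := by
  rw [f.as_sum]
  exact J.sum_mem h

end Monomial

section EdgeIdeal

variable {k V : Type*} [Field k] [DecidableEq V] {E : Finset (Finset V)}

theorem sum_single_one_apply (e : Finset V) (v : V) :
    (∑ x ∈ e, Finsupp.single x 1 : V →₀ ℕ) v = if v ∈ e then 1 else 0 := by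
  simp [Finsupp.finsetSum_apply, Finsupp.single_apply]

theorem monomial_mem_of_prod_X_mem {J : Ideal (MvPolynomial V k)} {e : Finset V} {m : V →₀ ℕ}
    (a : k) (he : ∏ x ∈ e, (X x : MvPolynomial V k) ∈ J) (hm : ∀ v ∈ e, m v ≠ 0) :
    monomial m a ∈ J := by
  rw [prod_X_eq_monomial] at he
  refine monomial_mem_of_le a he fun v => ?_
  rw [sum_single_one_apply]
  split_ifs with hv
  · exact Nat.one_le_iff_ne_zero.2 (hm v hv)
  · exact Nat.zero_le _

theorem prod_X_mem_edgeIdeal {e : Finset V} (he : e ∈ E) :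
    ∏ x ∈ e, (X x : MvPolynomial V k) ∈ edgeIdeal k E :=
  Ideal.subset_span ⟨e, he, rfl⟩

theorem exists_X_mem_of_edgeIdeal_le {p : Ideal (MvPolynomial V k)} [hp : p.IsPrime]
    (hle : edgeIdeal k E ≤ p) {e : Finset V} (he : e ∈ E) : ∃ v ∈ e, X v ∈ p :=
  (hp.prod_mem_iff).1 (hle (prod_X_mem_edgeIdeal he))

variable [Fintype V]

theorem edgeIdeal_le_coverIdeal {C : Finset V} (hC : ∀ e ∈ E, ∃ v ∈ e, v ∈ C) :
    edgeIdeal k E ≤ coverIdeal k C := by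
  rw [edgeIdeal, Ideal.span_le]
  rintro _ ⟨e, he, rfl⟩
  obtain ⟨v, hve, hvC⟩ := hC e he
  exact Ideal.mem_of_dvd _ (Finset.dvd_prod_of_mem _ hve) (X_mem_coverIdeal_iff.2 hvC)

theorem edgeIdeal_isRadical (E : Finset (Finset V)) : (edgeIdeal k E).IsRadical := by
  rintro f ⟨n, hn⟩
  refine mem_of_forall_monomial_mem fun m hm => ?_
  by_cases hedge : ∃ e ∈ E, ∀ v ∈ e, m v ≠ 0
  · obtain ⟨e, he, hem⟩ := hedge
    exact monomial_mem_of_prod_X_mem _ (prod_X_mem_edgeIdeal he) hem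
  · push Not at hedge
    have hf := (coverIdeal_isPrime _).mem_of_pow_mem n <|
      edgeIdeal_le_coverIdeal (C := Finset.univ.filter fun v => m v = 0) (by simpa using hedge) hn
    have hsum := mem_coverIdeal_iff.1 hf m hm
    rw [Finset.sum_eq_zero (by simp)] at hsum
    omega

theorem coverIdeal_mem_associatedPrimes {C : Finset V}
    (hC : Minimal (fun C : Finset V => ∀ e ∈ E, ∃ v ∈ e, v ∈ C) C) :
    coverIdeal k C ∈ associatedPrimes _ (MvPolynomial V k ⧸ edgeIdeal k E) := by
  have hprime := coverIdeal_isPrime (k := k) C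
  refine mem_associatedPrimes_quotient_iff.2 ⟨hprime, ∏ x ∈ Cᶜ, X x, fun g => ⟨fun hg => ?_, ?_⟩⟩
  · rw [g.as_sum, Finset.sum_mul]
    refine Ideal.sum_mem _ fun m hm => ?_
    obtain ⟨v, hvC, hmv⟩ := Finset.exists_ne_zero_of_sum_ne_zero
      (Nat.one_le_iff_ne_zero.1 (mem_coverIdeal_iff.1 hg m hm))
    obtain ⟨e, he, hev⟩ : ∃ e ∈ E, ∀ w ∈ e, w ∈ C → w = v := by
      by_contra! hno
      refine Finset.notMem_erase v C (hC.le_of_le (y := C.erase v) (fun e he => ?_)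
        (Finset.erase_subset v C) hvC)
      obtain ⟨w, hwe, hwC, hwv⟩ := hno e he
      exact ⟨w, hwe, Finset.mem_erase.2 ⟨hwv, hwC⟩⟩
    rw [prod_X_eq_monomial, monomial_mul]
    refine monomial_mem_of_prod_X_mem _ (prod_X_mem_edgeIdeal he) fun w hw => ?_
    rw [Finsupp.add_apply, sum_single_one_apply]
    by_cases hwC : w ∈ C
    · rw [hev w hw hwC]
      omega
    · simp [hwC]
  · intro hg
    refine (hprime.mem_or_mem (edgeIdeal_le_coverIdeal hC.prop hg)).resolve_right fun h => ?_
    obtain ⟨v, hv, hvC⟩ := hprime.prod_mem_iff.1 h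
    exact Finset.mem_compl.1 hv (X_mem_coverIdeal_iff.1 hvC)

/-- Monomials of elements of a symbolic power have large degree along every vertex cover. -/
theorem le_sum_of_mem_symbolicPower {n : ℕ} {f : MvPolynomial V k}
    (hf : f ∈ symbolicPower (edgeIdeal k E) n) {m : V →₀ ℕ} (hm : m ∈ f.support)
    {C : Finset V} (hC : ∀ e ∈ E, ∃ v ∈ e, v ∈ C) : n ≤ ∑ v ∈ C, m v := by
  obtain ⟨D, hDC, hD⟩ := exists_minimal_le_of_wellFoundedLT
    (fun C : Finset V => ∀ e ∈ E, ∃ v ∈ e, v ∈ C) C hC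
  obtain ⟨s, hs, hsf⟩ := mem_symbolicPower_iff.1 hf _ (coverIdeal_mem_associatedPrimes hD)
  have hdvd := dvd_markVars_of_mem_pow
    (Ideal.pow_right_mono (edgeIdeal_le_coverIdeal hD.prop) n hsf)
  rw [map_mul] at hdvd
  rw [mem_coverIdeal_iff_dvd] at hs
  exact (X_pow_dvd_markVars_iff.1
    (Polynomial.prime_X.pow_dvd_of_dvd_mul_left n hs hdvd) m hm).trans
    (Finset.sum_le_sum_of_subset hDC)

end EdgeIdeal

section Hypergraph

variable {V : Type*} {E : Finset (Finset V)}

/-- In a 3-partite hypergraph whose edges pairwise meet in a set `T` without having a common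
vertex in `T`, some two edges share exactly one vertex of `T`. -/
theorem exists_unique_common_vertex {c : V → Fin 3}
    (hc : ∀ e ∈ E, ∀ x ∈ e, ∀ y ∈ e, c x = c y → x = y) (hE : E.Nonempty) {T : Set V}
    (havoid : ∀ x ∈ T, ∃ e ∈ E, x ∉ e)
    (hmeet : ∀ e ∈ E, ∀ f ∈ E, ∃ x ∈ T, x ∈ e ∧ x ∈ f) :
    ∃ e ∈ E, ∃ f ∈ E, ∃ x ∈ T, x ∈ e ∧ x ∈ f ∧ ∀ w ∈ T, w ∈ e → w ∈ f → w = x := by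
  by_contra! hne
  have htwo : ∀ e ∈ E, ∀ f ∈ E, ∃ x ∈ T, ∃ y ∈ T, x ≠ y ∧ x ∈ e ∧ x ∈ f ∧ y ∈ e ∧ y ∈ f := by
    intro e he f hf
    obtain ⟨x, hxT, hxe, hxf⟩ := hmeet e he f hf
    obtain ⟨y, hyT, hye, hyf, hyx⟩ := hne e he f hf x hxT hxe hxf
    exact ⟨x, hxT, y, hyT, hyx.symm, hxe, hxf, hye, hyf⟩
  obtain ⟨e, he⟩ := hE
  obtain ⟨x, hxT, hxe, -⟩ := hmeet e he e he
  obtain ⟨g, hg, hxg⟩ := havoid x hxT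
  obtain ⟨y, hyT, z, hzT, hyz, hye, hyg, hze, hzg⟩ := htwo e he g hg
  obtain ⟨h, hh, hyh⟩ := havoid y hyT
  have hthree : ∀ w ∈ e, w = x ∨ w = y ∨ w = z := by
    intro w hw
    have hxy : c x ≠ c y := fun h => hxg (hc e he x hxe y hye h ▸ hyg)
    have hxz : c x ≠ c z := fun h => hxg (hc e he x hxe z hze h ▸ hzg)
    have hyz' : c y ≠ c z := fun h => hyz (hc e he y hye z hze h)
    have : c w = c x ∨ c w = c y ∨ c w = c z := by omega
    exact this.imp (hc e he w hw x hxe)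
      (Or.imp (hc e he w hw y hye) (hc e he w hw z hze))
  obtain ⟨u, huT, v, hvT, huv, hue, huh, hve, hvh⟩ := htwo e he h hh
  have hxh : x ∈ h := by grind
  have hzh : z ∈ h := by grind
  obtain ⟨w, hwT, hwg, hwh, hwz⟩ := hne g hg h hh z hzT hzg hzh
  have hxy : c x ≠ c y := fun h => hxg (hc e he x hxe y hye h ▸ hyg)
  have hxz : c x ≠ c z := fun h => hxg (hc e he x hxe z hze h ▸ hzg)
  have hyz' : c y ≠ c z := fun h => hyz (hc e he y hye z hze h)
  have hwx : c w ≠ c x := fun h' => hxg (hc h hh w hwh x hxh h' ▸ hwg)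
  have hwy : c w ≠ c y := fun h' => hyh (hc g hg w hwg y hyg h' ▸ hwh)
  exact hwz (hc g hg w hwg z hzg (by omega))

variable [DecidableEq V]

theorem inter_eq_singleton_of_triangle {c : V → Fin 3}
    (hc : ∀ e ∈ E, ∀ x ∈ e, ∀ y ∈ e, c x = c y → x = y)
    {e f g : Finset V} (he : e ∈ E) (hf : f ∈ E) (hg : g ∈ E) {x y z : V}
    (hxe : x ∈ e) (hxf : x ∈ f) (hye : y ∈ e) (hyg : y ∈ g) (hzf : z ∈ f) (hzg : z ∈ g)
    (hxg : x ∉ g) (hyf : y ∉ f) (hze : z ∉ e) : e ∩ f = {x} := by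
  ext w
  rw [Finset.mem_inter, Finset.mem_singleton]
  refine ⟨fun ⟨hwe, hwf⟩ => ?_, by rintro rfl; exact ⟨hxe, hxf⟩⟩
  have hxy : c x ≠ c y := fun h => hyf (hc e he x hxe y hye h ▸ hxf)
  have hxz : c x ≠ c z := fun h => hze (hc f hf x hxf z hzf h ▸ hxe)
  have hyz : c y ≠ c z := fun h => hze (hc g hg y hyg z hzg h ▸ hye)
  have hwy : c w ≠ c y := fun h => hyf (hc e he w hwe y hye h ▸ hwf)
  have hwz : c w ≠ c z := fun h => hze (hc f hf w hwf z hzf h ▸ hwe)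
  exact hc e he w hwe x hxe (by omega)

theorem badTriple_of_triangle {c : V → Fin 3}
    (hc : ∀ e ∈ E, ∀ x ∈ e, ∀ y ∈ e, c x = c y → x = y)
    {e f g : Finset V} (he : e ∈ E) (hf : f ∈ E) (hg : g ∈ E) {x y z : V}
    (hxe : x ∈ e) (hxf : x ∈ f) (hye : y ∈ e) (hyg : y ∈ g) (hzf : z ∈ f) (hzg : z ∈ g)
    (hxg : x ∉ g) (hyf : y ∉ f) (hze : z ∉ e) : BadTriple E e f g := by
  have hef : e ∩ f = {x} :=
    inter_eq_singleton_of_triangle hc he hf hg hxe hxf hye hyg hzf hzg hxg hyf hze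
  have hfg : f ∩ g = {z} :=
    inter_eq_singleton_of_triangle hc hf hg he hzf hzg hxf hxe hyg hye hze hxg hyf
  have heg : e ∩ g = {y} :=
    inter_eq_singleton_of_triangle hc he hg hf hye hyg hxe hxf hzg hzf hyf hxg hze
  refine ⟨he, hf, hg, ?_, ?_, ?_, ?_⟩
  · rintro rfl; exact hyf hye
  · rintro rfl; exact hxg hxf
  · rintro rfl; exact hxg hxe
  · rw [hef, hfg, heg]
    simp only [Finset.card_singleton, ne_eq, Finset.singleton_inj, true_and]
    refine ⟨?_, ?_, ?_⟩
    · rintro rfl; exact hxg hzg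
    · rintro rfl; exact hyf hzf
    · rintro rfl; exact hxg hyg

theorem exists_badTriple {c : V → Fin 3}
    (hc : ∀ e ∈ E, ∀ x ∈ e, ∀ y ∈ e, c x = c y → x = y) (hE : E.Nonempty) {T : Set V}
    (havoid : ∀ x ∈ T, ∃ e ∈ E, x ∉ e)
    (hmeet : ∀ e ∈ E, ∀ f ∈ E, ∃ x ∈ T, x ∈ e ∧ x ∈ f) : ∃ e f g, BadTriple E e f g := by
  obtain ⟨e, he, f, hf, x, hxT, hxe, hxf, huniq⟩ := exists_unique_common_vertex hc hE havoid hmeet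
  obtain ⟨g, hg, hxg⟩ := havoid x hxT
  obtain ⟨y, hyT, hye, hyg⟩ := hmeet e he g hg
  obtain ⟨z, hzT, hzf, hzg⟩ := hmeet f hf g hg
  exact ⟨e, f, g, badTriple_of_triangle hc he hf hg hxe hxf hye hyg hzf hzg hxg
    (fun h => hxg (huniq y hyT hye h ▸ hyg)) (fun h => hxg (huniq z hzT h hzf ▸ hzg))⟩

theorem BadTriple.mono {F : Finset (Finset V)} (hEF : E ⊆ F) {e f g : Finset V}
    (h : BadTriple E e f g) : BadTriple F e f g :=
  ⟨hEF h.1, hEF h.2.1, hEF h.2.2.1, h.2.2.2⟩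

theorem BadTriple.not_mem_of_mem {e f g : Finset V} (h : BadTriple E e f g) {x : V}
    (he : x ∈ e) (hf : x ∈ f) : x ∉ g := by
  intro hg
  obtain ⟨-, -, -, -, -, -, hef, hfg, -, hne, -⟩ := h
  obtain ⟨a, ha⟩ := Finset.card_eq_one.1 hef
  obtain ⟨b, hb⟩ := Finset.card_eq_one.1 hfg
  have hxa : x ∈ e ∩ f := Finset.mem_inter.2 ⟨he, hf⟩
  have hxb : x ∈ f ∩ g := Finset.mem_inter.2 ⟨hf, hg⟩
  rw [ha, Finset.mem_singleton] at hxa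
  rw [hb, Finset.mem_singleton] at hxb
  exact hne (by rw [ha, hb, ← hxa, ← hxb])

theorem BadTriple.prod_X_mem_sq {k : Type*} [Field k] {e f g : Finset V}
    (h : BadTriple E e f g) {p : Ideal (MvPolynomial V k)} [p.IsPrime] (hle : edgeIdeal k E ≤ p) :
    ∏ x ∈ e ∪ f ∪ g, (X x : MvPolynomial V k) ∈ p ^ 2 := by
  obtain ⟨u, hu, hup⟩ := exists_X_mem_of_edgeIdeal_le hle h.1
  obtain ⟨v, hv, hvp⟩ := exists_X_mem_of_edgeIdeal_le hle h.2.1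
  obtain ⟨w, hw, hwp⟩ := exists_X_mem_of_edgeIdeal_le hle h.2.2.1
  obtain ⟨a, ha, b, hb, hab, hap, hbp⟩ : ∃ a ∈ e ∪ f ∪ g, ∃ b ∈ e ∪ f ∪ g, a ≠ b ∧
      (X a : MvPolynomial V k) ∈ p ∧ (X b : MvPolynomial V k) ∈ p := by
    by_cases huv : u = v
    · subst huv
      refine ⟨u, by simp [hu], w, by simp [hw], ?_, hup, hwp⟩
      rintro rfl
      exact h.not_mem_of_mem hu hv hw
    · exact ⟨u, by simp [hu], v, by simp [hv], huv, hup, hvp⟩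
  rw [← Finset.mul_prod_erase _ _ ha, ← Finset.mul_prod_erase _ _
    (Finset.mem_erase.2 ⟨hab.symm, hb⟩), ← mul_assoc, pow_two]
  exact Ideal.mul_mem_right _ _ (Ideal.mul_mem_mul hap hbp)

end Hypergraph

/-- the second symbolic power of the edge ideal of a 3-uniform
3-partite hypergraph equals the second ordinary power plus the ideal generated by
the products of vertices of the bad subhypergraphs of length 3. -/
theorem stmt9 {k V : Type*} [Field k] [Fintype V] [DecidableEq V]
    (E : Finset (Finset V))
    (huniform : ∀ e ∈ E, e.card = 3)
    (Xp : Fin 3 → Finset V)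
    (hdisj : Pairwise fun i j => Disjoint (Xp i) (Xp j))
    (hcover : ∀ v : V, ∃ i, v ∈ Xp i)
    (hpartite : ∀ e ∈ E, ∀ i, (e ∩ Xp i).card = 1) :
    symbolicPower (edgeIdeal k E) 2 =
      (edgeIdeal k E) ^ 2 ⊔
        Ideal.span { m : MvPolynomial V k | ∃ e₁ e₂ e₃ : Finset V,
          BadTriple E e₁ e₂ e₃ ∧ m = ∏ x ∈ e₁ ∪ e₂ ∪ e₃, X x } := by
  choose c hcX using hcover
  have hc : ∀ e ∈ E, ∀ x ∈ e, ∀ y ∈ e, c x = c y → x = y := by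
    intro e he x hx y hy hxy
    exact Finset.card_le_one.1 (hpartite e he (c x)).le x (Finset.mem_inter.2 ⟨hx, hcX x⟩) y
      (Finset.mem_inter.2 ⟨hy, hxy ▸ hcX y⟩)
  apply le_antisymm
  · intro f hf
    refine mem_of_forall_monomial_mem fun m hm => ?_
    by_cases hsq : ∃ e ∈ E, ∃ e' ∈ E,
        (∑ x ∈ e, Finsupp.single x 1 + ∑ x ∈ e', Finsupp.single x 1 : V →₀ ℕ) ≤ m
    · obtain ⟨e, he, e', he', hle⟩ := hsq
      refine Ideal.mem_sup_left (monomial_mem_of_le _ ?_ hle)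
      rw [← one_mul (1 : k), ← monomial_mul, ← prod_X_eq_monomial, ← prod_X_eq_monomial, pow_two]
      exact Ideal.mul_mem_mul (prod_X_mem_edgeIdeal he) (prod_X_mem_edgeIdeal he')
    · let F := E.filter fun e => ∀ v ∈ e, m v ≠ 0
      have hF : F.Nonempty := by
        by_contra hF
        have hcov : ∀ e ∈ E, ∃ v ∈ e, v ∈ Finset.univ.filter fun v => m v = 0 := by
          intro e he
          by_contra! hno
          exact hF ⟨e, Finset.mem_filter.2 ⟨he, by simpa using hno⟩⟩
        have hsum := le_sum_of_mem_symbolicPower hf hm hcov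
        rw [Finset.sum_eq_zero (by simp)] at hsum
        omega
      have havoid : ∀ x ∈ {x | m x = 1}, ∃ e ∈ F, x ∉ e := by
        intro x hx
        by_contra! hno
        have hcov : ∀ e ∈ E, ∃ v ∈ e, v ∈ insert x (Finset.univ.filter fun v => m v = 0) := by
          intro e he
          by_cases heF : e ∈ F
          · exact ⟨x, hno e heF, Finset.mem_insert_self _ _⟩
          · simp only [F, Finset.mem_filter, he, true_and] at heF
            push Not at heF
            obtain ⟨v, hv, hv0⟩ := heF
            exact ⟨v, hv, by simp [hv0]⟩
        have hsum := le_sum_of_mem_symbolicPower hf hm hcov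
        rw [Set.mem_ofPred_eq] at hx
        rw [Finset.sum_insert (by simp [hx]), Finset.sum_eq_zero (by simp), hx] at hsum
        omega
      have hmeet : ∀ e ∈ F, ∀ e' ∈ F, ∃ x ∈ {x | m x = 1}, x ∈ e ∧ x ∈ e' := by
        intro e he e' he'
        obtain ⟨heE, hem⟩ := Finset.mem_filter.1 he
        obtain ⟨heE', hem'⟩ := Finset.mem_filter.1 he'
        by_contra! hno
        refine hsq ⟨e, heE, e', heE', fun v => ?_⟩
        have hv := hem v
        have hv' := hem' v
        have hnov := hno v
        rw [Finsupp.add_apply, sum_single_one_apply, sum_single_one_apply]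
        rw [Set.mem_ofPred_eq] at hnov
        split_ifs <;> grind
      obtain ⟨e₁, e₂, e₃, hbad⟩ := exists_badTriple
        (fun e he => hc e (Finset.mem_of_mem_filter e he)) hF havoid hmeet
      refine Ideal.mem_sup_right (monomial_mem_of_prod_X_mem _ (Ideal.subset_span
        ⟨e₁, e₂, e₃, hbad.mono (Finset.filter_subset _ _), rfl⟩) fun v hv => ?_)
      have h₁ := (Finset.mem_filter.1 hbad.1).2 v
      have h₂ := (Finset.mem_filter.1 hbad.2.1).2 v
      have h₃ := (Finset.mem_filter.1 hbad.2.2.1).2 v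
      rw [Finset.mem_union, Finset.mem_union] at hv
      tauto
  · refine sup_le (pow_le_symbolicPower 2) (Ideal.span_le.2 ?_)
    rintro _ ⟨e₁, e₂, e₃, hbad, rfl⟩
    refine mem_symbolicPower_of_forall_mem_pow (edgeIdeal_isRadical E) fun p hp => ?_
    have : p.IsPrime := hp.isPrime
    exact hbad.prod_X_mem_sq (le_of_mem_associatedPrimes_quotient hp)
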